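/- arXiv:2007.02235 — 4 statements merged into one kernel-verified Lean document; each statement's English description precedes it below -/
import Mathlib

section
/- (Proposition 1, PMF form.) Let X be a finite type, K ≥ 2, and let p be a probability mass function on X × Fin K (the ordinary data distribution D). Let T be an invertible K×K real matrix each of whose rows is a probability vector (entries nonnegative, each row summing to 1), with T_{i j} = P(Ȳ = j | Y = i). Define the complementary data distribution p̄ on X × Fin K by first drawing (x, y) ~ p and then drawing ȳ from the y-th row of T, keeping (x, ȳ). Then for every loss ℓ : Fin K → X → ℝ, the expectation under p̄ of the rewritten loss ℓ̄(ȳ, x) = (T⁻¹ ·ᵥ ℓ(·, x))_ȳ equals the expectation under p of the ordinary loss ℓ(y, x); that is, E_{(x,ȳ)~p̄}[e_ȳᵀ T⁻¹ ℓ(·,x)] = E_{(x,y)~p}[ℓ(y, x)]. -/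
open Matrix

theorem vecMul_dotProduct_mulVec_of_mul_eq_one {ι κ R : Type*} [Fintype ι] [DecidableEq ι]
    [Fintype κ] [Semiring R] {T : Matrix ι κ R} {S : Matrix κ ι R} (hTS : T * S = 1)
    (v w : ι → R) : (v ᵥ* T) ⬝ᵥ (S *ᵥ w) = v ⬝ᵥ w := by
  rw [← dotProduct_mulVec, mulVec_mulVec, hTS, one_mulVec]

theorem ure_unbiased_pmf_general {X ι κ R : Type*} [Fintype X] [Fintype ι] [DecidableEq ι]
    [Fintype κ] [Semiring R] (p : X × ι → R) {T : Matrix ι κ R} {S : Matrix κ ι R}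
    (hTS : T * S = 1) (pbar : X × κ → R)
    (hpbar : ∀ x j, pbar (x, j) = ∑ i, p (x, i) * T i j) (ℓ : ι → X → R) :
    ∑ z : X × κ, pbar z * (S *ᵥ fun i => ℓ i z.1) z.2 = ∑ z : X × ι, p z * ℓ z.2 z.1 := by
  simp only [Fintype.sum_prod_type]
  refine Finset.sum_congr rfl fun x _ => ?_
  have pbar_eq_vecMul : (fun j => pbar (x, j)) = (fun i => p (x, i)) ᵥ* T :=
    funext (hpbar x)
  calc
    ∑ j, pbar (x, j) * (S *ᵥ fun i => ℓ i x) j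
        = ((fun i => p (x, i)) ᵥ* T) ⬝ᵥ (S *ᵥ fun i => ℓ i x) := by
      rw [← pbar_eq_vecMul, dotProduct]
    _ = ∑ i, p (x, i) * ℓ i x := vecMul_dotProduct_mulVec_of_mul_eq_one hTS _ _

/-- Proposition 1 (PMF form): the expectation under the complementary
distribution `p̄` of the rewritten loss `ℓ̄(ȳ, x) = (T⁻¹ ·ᵥ ℓ(·, x)) ȳ`
equals the expectation under `p` of the ordinary loss `ℓ(y, x)`. -/
theorem ure_unbiased_pmf
    (X : Type*) [Fintype X]
    (K : ℕ) (hK : 2 ≤ K)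
    (p : X × Fin K → ℝ)
    (hp0 : ∀ z, 0 ≤ p z) (hp1 : ∑ z, p z = 1)
    (T : Matrix (Fin K) (Fin K) ℝ) (hT : IsUnit T.det)
    (hTrow0 : ∀ i j, 0 ≤ T i j) (hTrow1 : ∀ i, ∑ j, T i j = 1)
    (pbar : X × Fin K → ℝ)
    (hpbar : ∀ x j, pbar (x, j) = ∑ i, p (x, i) * T i j)
    (ℓ : Fin K → X → ℝ) :
    ∑ z : X × Fin K, pbar z * (T⁻¹.mulVec (fun i => ℓ i z.1)) z.2
      = ∑ z : X × Fin K, p z * ℓ z.2 z.1 :=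
  ure_unbiased_pmf_general p (T.mul_nonsing_inv hT) pbar hpbar ℓ
end

section
/- (Pointwise unbiasedness under the uniform assumption.) Let K ≥ 2, let v : Fin K → ℝ be any loss vector, and define the rewritten loss ℓ̄(ȳ) = −(K−1) · v_ȳ + Σ_{j=1}^{K} v_j. Then for every y ∈ Fin K, averaging ℓ̄ uniformly over all complementary labels recovers the ordinary loss: (K−1)⁻¹ · Σ_{y' ∈ Fin K, y' ≠ y} ℓ̄(y') = v_y. -/
section RewrittenLoss

open Finset

variable {ι R M : Type*} [Fintype ι] [AddCommGroup M]

section Ring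

variable (R) [Ring R] [Module R M]

/-- The rewritten loss `ℓ̄(ȳ) = −(K−1) v_ȳ + Σ_j v_j` for learning from uniform complementary
labels. The label set is any finite type `ι`, with `K = Fintype.card ι`, and losses take values in
an `R`-module; `R` is explicit because the values alone do not determine it. -/
def rewrittenLoss (v : ι → M) (ybar : ι) : M :=
  -((Fintype.card ι : R) - 1) • v ybar + ∑ j, v j

theorem sum_rewrittenLoss (v : ι → M) : ∑ ybar, rewrittenLoss R v ybar = ∑ j, v j := by
  calc ∑ ybar, rewrittenLoss R v ybar
      = -((Fintype.card ι : R) - 1) • ∑ j, v j + (Fintype.card ι : R) • ∑ j, v j := by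
        simp only [rewrittenLoss, sum_add_distrib, ← smul_sum, sum_const, card_univ,
          Nat.cast_smul_eq_nsmul]
    _ = ∑ j, v j := by
        rw [← add_smul, neg_sub, sub_add_cancel, one_smul]

theorem sum_rewrittenLoss_ne [DecidableEq ι] (v : ι → M) (y : ι) :
    ∑ y' with y' ≠ y, rewrittenLoss R v y' = ((Fintype.card ι : R) - 1) • v y := by
  calc ∑ y' with y' ≠ y, rewrittenLoss R v y'
      = ∑ y', rewrittenLoss R v y' - rewrittenLoss R v y := by
        rw [filter_ne', sum_erase_eq_sub (mem_univ y)]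
    _ = ∑ j, v j - (-((Fintype.card ι : R) - 1) • v y + ∑ j, v j) := by
        rw [sum_rewrittenLoss, rewrittenLoss]
    _ = ((Fintype.card ι : R) - 1) • v y := by
        rw [sub_add_cancel_right, neg_smul, neg_neg]

end Ring

theorem uniform_rewritten_loss_unbiased_general [DecidableEq ι] [DivisionRing R] [Module R M]
    (hcard : (Fintype.card ι : R) ≠ 1) (v : ι → M) (y : ι) :
    ((Fintype.card ι : R) - 1)⁻¹ • ∑ y' with y' ≠ y, rewrittenLoss R v y' = v y := by
  rw [sum_rewrittenLoss_ne, inv_smul_smul₀ (sub_ne_zero.mpr hcard)]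

end RewrittenLoss

/-- Pointwise unbiasedness under the uniform assumption: averaging the
rewritten loss `ℓ̄(ȳ) = −(K−1) v_ȳ + Σ_j v_j` uniformly over complementary
labels `y' ≠ y` recovers the ordinary loss `v_y`. -/
theorem uniform_rewritten_loss_unbiased
    (K : ℕ) (hK : 2 ≤ K)
    (v : Fin K → ℝ)
    (ℓbar : Fin K → ℝ)
    (hℓbar : ∀ ybar, ℓbar ybar = -((K : ℝ) - 1) * v ybar + ∑ j, v j)
    (y : Fin K) :
    ((K : ℝ) - 1)⁻¹ * ∑ y' ∈ Finset.univ.filter (· ≠ y), ℓbar y' = v y := by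
  obtain rfl : ℓbar = rewrittenLoss ℝ v := funext fun ybar ↦ by simp [hℓbar, rewrittenLoss]
  have hcard : (Fintype.card (Fin K) : ℝ) ≠ 1 := by simpa using (show K ≠ 1 by lia)
  simpa using uniform_rewritten_loss_unbiased_general hcard v y
end

section
/- (Proposition 2.) Let X be a finite type, K ≥ 2, and let p be a probability mass function on X × Fin K (the ordinary distribution D). Define the complementary distribution p̄ on X × Fin K by drawing (x, y) ~ p and then ȳ uniformly at random from Fin K \ {y}, keeping (x, ȳ). Then for every classifier f : X → Fin K, the ordinary classification risk equals (K−1) times the complementary classification risk: E_{(x,y)~p}[1[y ≠ f(x)]] = (K−1) · E_{(x,ȳ)~p̄}[1[ȳ = f(x)]]. In particular, the classifiers minimizing the expected complementary 0-1 loss over p̄ are exactly those minimizing the ordinary classification error over p. -/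
/-!
Averaging over the noisy label can be moved from the distribution to the loss: relabelling with a
transition matrix `T` and measuring the loss `L` is the same as keeping the labels and measuring
`T * L`. The complementary 0-1 loss is the identity matrix, so for it `T * L` is `T` itself, and
uniform complementary labels have `T = (K - 1)⁻¹ • L₀₁`, with `L₀₁` the ordinary 0-1 loss.
-/

namespace ComplementaryLabel

variable {X Y Z A R : Type*} [Fintype Y]

section Risk

/-- The expected loss of the predictor `f` when the example `(x, y)` has weight `p (x, y)`, which
may be any element of `R`. A loss is encoded as a matrix whose entry `L y a` is the cost of
predicting `a` when the label is `y`. -/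
def risk [Fintype X] [NonUnitalNonAssocSemiring R] (p : X × Y → R) (L : Matrix Y A R)
    (f : X → A) : R :=
  ∑ z, p z * L z.2 (f z.1)

/-- The distribution obtained from `p` by label noise with transition matrix `T`: the entry `T y z`
is the probability of replacing the label `y` by `z`, independently of the instance `x`. -/
def relabel [NonUnitalNonAssocSemiring R] (T : Matrix Y Z R) (p : X × Y → R) : X × Z → R :=
  fun w => ∑ y, p (w.1, y) * T y w.2

theorem risk_relabel [Fintype X] [Fintype Z] [NonUnitalSemiring R] (T : Matrix Y Z R)
    (p : X × Y → R) (L : Matrix Z A R) (f : X → A) :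
    risk (relabel T p) L f = risk p (T * L) f := by
  simp only [risk, relabel, Fintype.sum_prod_type, Matrix.mul_apply, Finset.sum_mul,
    Finset.mul_sum, mul_assoc]
  exact Finset.sum_congr rfl fun x _ => Finset.sum_comm

theorem risk_smul [Fintype X] [NonUnitalCommSemiring R] (c : R) (p : X × Y → R)
    (L : Matrix Y A R) (f : X → A) : risk p (c • L) f = c * risk p L f := by
  simp only [risk, Matrix.smul_apply, smul_eq_mul, Finset.mul_sum, mul_left_comm]

end Risk

section ZeroOne

variable [DecidableEq Y]

/-- The multiclass 0-1 loss `ℓ₀₁`. Its complementary counterpart `ℓ̄₀₁` is the identity matrix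
`1`. -/
def zeroOneLoss (Y R : Type*) [DecidableEq Y] [Zero R] [One R] : Matrix Y Y R :=
  Matrix.of fun y a => if y ≠ a then 1 else 0

variable [Field R]

/-- The transition matrix of uniform complementary labels: `y` is replaced by a label drawn
uniformly from those different from `y`. When `Y` has a single label there is none to draw, and the
matrix is zero. -/
def uniformTransition (Y R : Type*) [Fintype Y] [DecidableEq Y] [Field R] : Matrix Y Y R :=
  Matrix.of fun y ybar => if ybar = y then 0 else ((Fintype.card Y : R) - 1)⁻¹

theorem uniformTransition_eq_smul_zeroOneLoss :
    uniformTransition Y R = ((Fintype.card Y : R) - 1)⁻¹ • zeroOneLoss Y R := by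
  ext y ybar
  simp [uniformTransition, zeroOneLoss, eq_comm]

theorem risk_relabel_uniformTransition_one [Fintype X] (p : X × Y → R) (f : X → Y) :
    risk (relabel (uniformTransition Y R) p) 1 f
      = ((Fintype.card Y : R) - 1)⁻¹ * risk p (zeroOneLoss Y R) f := by
  rw [risk_relabel, mul_one, uniformTransition_eq_smul_zeroOneLoss, risk_smul]

end ZeroOne

end ComplementaryLabel

open ComplementaryLabel

theorem complementary_zero_one_risk_general {X Y R : Type*} [Fintype X] [Fintype Y]
    [DecidableEq Y] [Nontrivial Y] [Field R] [LinearOrder R] [IsStrictOrderedRing R]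
    (p : X × Y → R) :
    (∀ f : X → Y, risk p (zeroOneLoss Y R) f
        = ((Fintype.card Y : R) - 1) * risk (relabel (uniformTransition Y R) p) 1 f) ∧
    (∀ f : X → Y,
        (∀ f' : X → Y, risk (relabel (uniformTransition Y R) p) 1 f
            ≤ risk (relabel (uniformTransition Y R) p) 1 f')
        ↔ (∀ f' : X → Y, risk p (zeroOneLoss Y R) f ≤ risk p (zeroOneLoss Y R) f')) := by
  have card_sub_one_pos : 0 < (Fintype.card Y : R) - 1 :=
    sub_pos.mpr (Nat.one_lt_cast.mpr Fintype.one_lt_card)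
  simp only [risk_relabel_uniformTransition_one]
  exact ⟨fun f => (mul_inv_cancel_left₀ card_sub_one_pos.ne' _).symm,
    fun f => forall_congr' fun f' => mul_le_mul_iff_right₀ (inv_pos.mpr card_sub_one_pos)⟩

/-- Proposition 2: the ordinary classification risk equals `(K−1)` times the
complementary classification risk, where the complementary distribution `p̄`
draws `(x, y) ~ p` and then `ȳ` uniformly from `Fin K \ {y}`.  In particular,
the minimizers of the complementary risk are exactly the minimizers of the
ordinary classification error. -/
theorem complementary_zero_one_risk
    (X : Type*) [Fintype X]
    (K : ℕ) (hK : 2 ≤ K)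
    (p : X × Fin K → ℝ)
    (hp0 : ∀ z, 0 ≤ p z) (hp1 : ∑ z, p z = 1)
    (pbar : X × Fin K → ℝ)
    (hpbar : ∀ x ybar, pbar (x, ybar)
      = ∑ y, p (x, y) * (if ybar = y then 0 else ((K : ℝ) - 1)⁻¹)) :
    (∀ f : X → Fin K,
        ∑ z : X × Fin K, p z * (if z.2 ≠ f z.1 then (1 : ℝ) else 0)
          = ((K : ℝ) - 1) *
            ∑ z : X × Fin K, pbar z * (if z.2 = f z.1 then (1 : ℝ) else 0)) ∧
    (∀ f : X → Fin K,
        (∀ f' : X → Fin K,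
            ∑ z : X × Fin K, pbar z * (if z.2 = f z.1 then (1 : ℝ) else 0)
              ≤ ∑ z : X × Fin K, pbar z * (if z.2 = f' z.1 then (1 : ℝ) else 0))
        ↔ (∀ f' : X → Fin K,
            ∑ z : X × Fin K, p z * (if z.2 ≠ f z.1 then (1 : ℝ) else 0)
              ≤ ∑ z : X × Fin K, p z * (if z.2 ≠ f' z.1 then (1 : ℝ) else 0))) := by
  have : Nontrivial (Fin K) := Fin.nontrivial_iff_two_le.mpr hK
  obtain rfl : pbar = relabel (uniformTransition (Fin K) ℝ) p := by
    ext ⟨x, ybar⟩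
    simp only [hpbar, relabel, uniformTransition, Matrix.of_apply, Fintype.card_fin]
  simpa only [risk, zeroOneLoss, Matrix.of_apply, Matrix.one_apply, Fintype.card_fin]
    using complementary_zero_one_risk_general p
end

section
/- (Proposition 3: an unbiased risk estimator gives an unbiased gradient estimator, uniform case.) Let K ≥ 2, let E be a real normed vector space (the parameter space), let θ₀ ∈ E, and let ℓ : Fin K → E → ℝ be such that for each j ∈ Fin K the map θ ↦ ℓ(j, θ) is differentiable at θ₀. Define the rewritten loss ℓ̄ : Fin K → E → ℝ by ℓ̄(ȳ, θ) = −(K−1) · ℓ(ȳ, θ) + Σ_{j=1}^{K} ℓ(j, θ). Then for every y ∈ Fin K, the uniform average over complementary labels of the derivative of ℓ̄ equals the derivative of the ordinary loss: (K−1)⁻¹ • Σ_{y' ∈ Fin K, y' ≠ y} fderiv ℝ (θ ↦ ℓ̄(y', θ)) θ₀ = fderiv ℝ (θ ↦ ℓ(y, θ)) θ₀. -/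
/-!
Rewriting a family of losses is a linear operation on the family, so it commutes with
differentiation, and averaging over the complementary labels is a left inverse of it in every
module. The identity behind unbiasedness of the risk, read in the space of continuous linear maps,
is therefore unbiasedness of the gradient.
-/

section Rewrite

variable (R : Type*) {ι M : Type*} [Ring R] [AddCommGroup M] [Module R M] [Fintype ι]

/-- The unbiased-risk-estimator rewriting of a family `v` indexed by the labels `ι`, under uniform
complementary labels. It is defined for families in any module, so that it applies both to the
values of the losses and to their derivatives. -/
def complementaryRewrite (v : ι → M) (i : ι) : M :=
  -((Fintype.card ι : R) - 1) • v i + ∑ j, v j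

theorem sum_complementaryRewrite (v : ι → M) :
    ∑ i, complementaryRewrite R v i = ∑ i, v i := by
  simp only [complementaryRewrite, Finset.sum_add_distrib, ← Finset.smul_sum, Finset.sum_const,
    Finset.card_univ, ← Nat.cast_smul_eq_nsmul R, ← add_smul]
  rw [show -((Fintype.card ι : R) - 1) + Fintype.card ι = 1 by abel, one_smul]

theorem sum_ne_complementaryRewrite [DecidableEq ι] (v : ι → M) (y : ι) :
    ∑ i with i ≠ y, complementaryRewrite R v i = ((Fintype.card ι : R) - 1) • v y := by
  calc ∑ i with i ≠ y, complementaryRewrite R v i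
      = ∑ i, complementaryRewrite R v i - complementaryRewrite R v y := by
        rw [Finset.filter_ne', Finset.sum_erase_eq_sub (Finset.mem_univ y)]
    _ = ∑ i, v i - (-((Fintype.card ι : R) - 1) • v y + ∑ i, v i) := by
        rw [sum_complementaryRewrite, complementaryRewrite]
    _ = ((Fintype.card ι : R) - 1) • v y := by
        rw [neg_smul]
        abel

end Rewrite

theorem average_complementaryRewrite {𝕜 ι M : Type*} [DivisionRing 𝕜] [AddCommGroup M]
    [Module 𝕜 M] [Fintype ι] [DecidableEq ι] (hcard : (Fintype.card ι : 𝕜) ≠ 1)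
    (v : ι → M) (y : ι) :
    ((Fintype.card ι : 𝕜) - 1)⁻¹ • ∑ i with i ≠ y, complementaryRewrite 𝕜 v i = v y := by
  rw [sum_ne_complementaryRewrite, inv_smul_smul₀ (sub_ne_zero.mpr hcard)]

section Derivative

variable {𝕜 ι E F : Type*} [NontriviallyNormedField 𝕜] [NormedAddCommGroup E] [NormedSpace 𝕜 E]
  [NormedAddCommGroup F] [NormedSpace 𝕜 F] [Fintype ι] {ℓ : ι → E → F} {θ₀ : E}

theorem hasFDerivAt_complementaryRewrite {ℓ' : ι → E →L[𝕜] F}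
    (hℓ : ∀ j, HasFDerivAt (ℓ j) (ℓ' j) θ₀) (i : ι) :
    HasFDerivAt (fun θ => complementaryRewrite 𝕜 (fun j => ℓ j θ) i)
      (complementaryRewrite 𝕜 ℓ' i) θ₀ :=
  ((hℓ i).fun_const_smul _).fun_add (HasFDerivAt.fun_sum fun j _ => hℓ j)

theorem fderiv_complementaryRewrite (hℓ : ∀ j, DifferentiableAt 𝕜 (ℓ j) θ₀) (i : ι) :
    fderiv 𝕜 (fun θ => complementaryRewrite 𝕜 (fun j => ℓ j θ) i) θ₀ =
      complementaryRewrite 𝕜 (fun j => fderiv 𝕜 (ℓ j) θ₀) i :=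
  (hasFDerivAt_complementaryRewrite (fun j => (hℓ j).hasFDerivAt) i).fderiv

theorem ure_gives_uge_uniform_general [DecidableEq ι] (hcard : (Fintype.card ι : 𝕜) ≠ 1)
    (hℓ : ∀ j, DifferentiableAt 𝕜 (ℓ j) θ₀) (y : ι) :
    ((Fintype.card ι : 𝕜) - 1)⁻¹ •
        ∑ i with i ≠ y, fderiv 𝕜 (fun θ => complementaryRewrite 𝕜 (fun j => ℓ j θ) i) θ₀ =
      fderiv 𝕜 (ℓ y) θ₀ := by
  simp only [fderiv_complementaryRewrite hℓ]
  exact average_complementaryRewrite hcard (fun j => fderiv 𝕜 (ℓ j) θ₀) y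

end Derivative

/-- Proposition 3: under the uniform assumption, the uniform average over
complementary labels of the derivative of the rewritten loss equals the
derivative of the ordinary loss (an unbiased gradient estimator). -/
theorem ure_gives_uge_uniform
    (K : ℕ) (hK : 2 ≤ K)
    (E : Type*) [NormedAddCommGroup E] [NormedSpace ℝ E]
    (θ₀ : E)
    (ℓ : Fin K → E → ℝ)
    (hdiff : ∀ j : Fin K, DifferentiableAt ℝ (ℓ j) θ₀)
    (ℓbar : Fin K → E → ℝ)
    (hℓbar : ∀ ybar θ, ℓbar ybar θ = -((K : ℝ) - 1) * ℓ ybar θ + ∑ j, ℓ j θ)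
    (y : Fin K) :
    ((K : ℝ) - 1)⁻¹ •
        ∑ y' ∈ Finset.univ.filter (· ≠ y), fderiv ℝ (fun θ => ℓbar y' θ) θ₀
      = fderiv ℝ (fun θ => ℓ y θ) θ₀ := by
  have hcard : (Fintype.card (Fin K) : ℝ) ≠ 1 := by
    rw [Fintype.card_fin]
    exact_mod_cast (show K ≠ 1 by lia)
  simpa only [hℓbar, complementaryRewrite, Fintype.card_fin, smul_eq_mul] using
    ure_gives_uge_uniform_general hcard hdiff y
end
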